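/- arXiv:1812.06369 — 5 statements merged into one kernel-verified Lean document; each statement's English description precedes it below -/
import Mathlib

section
/- Let 𝒳 be a finite set, P_X a probability distribution on 𝒳, and P_F a probability distribution on the set of functions from 𝒳 to {0,1}. Let (X,F) ~ P_X × P_F, let W = g(X, F(X)) for a function g : 𝒳 × {0,1} → {0,1}, and let (X̃,Ỹ) ~ P_X × Unif({0,1}) be independent of (X,F). Then Var_F(P[W=1 | F]) ≤ E_F[(P_X[g(X,F(X))=1] − P[g(X̃,Ỹ)=1])²] ≤ min(P[g(X̃,Ỹ)=1], P[g(X̃,Ỹ)=0]) · √(Pred(P_X, P_F)). -/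
/-!
Let `s_f(x) = ±1` be the sign of `f x` and `h(x) = (g(x,1) - g(x,0)) / 2`. Then
`g(x, f x)` minus its average over a uniform label equals `h(x) s_f(x)`, so the deviation
`P_X[g(X, f(X)) = 1] - P[g(X̃, Ỹ) = 1]` is `D_f = E_X[h(X) s_f(X)]`.

With `E = E_F[D_F²] = E_X[h(X) · E_F[s_F(X) D_F]]`, Cauchy–Schwarz in `X` gives
`E² ≤ E_X[h²] · E_{F,F'}[D_F D_{F'} ⟨s_F, s_{F'}⟩]`, and Cauchy–Schwarz in `(F, F')` bounds the
last factor by `E · √Pred`. Hence `E ≤ E_X[h²] √Pred` (`second_moment_le`), and `h²` is pointwise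
at most the conditional probability, given `x`, of either value of `g(x, Ỹ)`.
The first inequality says that the mean minimises the expected squared deviation
(`variance_le_sq_dev`).
-/

open Finset

/-- The cross-predictability of a distribution `PF` on Boolean-valued functions with respect
to an input distribution `PX`: `E_{F,F'} (E_X (-1)^{F(X)+F'(X)})^2`. -/
noncomputable def crossPred {𝒳 : Type*} [Fintype 𝒳] [DecidableEq 𝒳]
    (PX : 𝒳 → ℝ) (PF : (𝒳 → Bool) → ℝ) : ℝ :=
  ∑ f : 𝒳 → Bool, ∑ f' : 𝒳 → Bool, PF f * PF f' *
    (∑ x : 𝒳, PX x * (if f x = f' x then (1 : ℝ) else -1)) ^ 2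

/-- Cauchy–Schwarz for a nonnegative weight `w`. -/
lemma weighted_cauchy_schwarz {ι : Type*} (t : Finset ι) (w a b : ι → ℝ) (hw : ∀ i, 0 ≤ w i) :
    (∑ i ∈ t, w i * (a i * b i)) ^ 2 ≤ (∑ i ∈ t, w i * a i ^ 2) * ∑ i ∈ t, w i * b i ^ 2 :=
  Finset.sum_sq_le_sum_mul_sum_of_sq_le_mul t
    (fun i _ => mul_nonneg (hw i) (sq_nonneg _)) (fun i _ => mul_nonneg (hw i) (sq_nonneg _))
    (fun i _ => le_of_eq (by ring))

lemma variance_le_sq_dev {ι : Type*} [Fintype ι] (p A : ι → ℝ) (hp : ∑ i, p i = 1) (c : ℝ) :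
    ∑ i, p i * (A i - ∑ j, p j * A j) ^ 2 ≤ ∑ i, p i * (A i - c) ^ 2 := by
  have expand : ∀ d : ℝ, ∑ i, p i * (A i - d) ^ 2
      = ∑ i, p i * A i ^ 2 - 2 * d * ∑ i, p i * A i + d ^ 2 := by
    intro d
    calc ∑ i, p i * (A i - d) ^ 2
        = ∑ i, (p i * A i ^ 2 - 2 * d * (p i * A i) + d ^ 2 * p i) :=
          Finset.sum_congr rfl fun i _ => by ring
      _ = _ := by
          rw [Finset.sum_add_distrib, Finset.sum_sub_distrib, ← Finset.mul_sum, ← Finset.mul_sum,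
            hp, mul_one]
  rw [expand, expand]
  nlinarith [sq_nonneg (∑ j, p j * A j - c)]

/-- The second moment of `D_f = ∑ x, p x * (h x * s f x)` is controlled by the weighted norm
of `h` and the mean squared correlation of the family `s`. -/
lemma second_moment_le {X F : Type*} [Fintype X] [Fintype F] (p : X → ℝ) (q : F → ℝ)
    (hp : ∀ x, 0 ≤ p x) (hq : ∀ f, 0 ≤ q f) (h : X → ℝ) (s : F → X → ℝ) :
    ∑ f, q f * (∑ x, p x * (h x * s f x)) ^ 2 ≤
      (∑ x, p x * h x ^ 2) *
        Real.sqrt (∑ f, ∑ f', q f * q f' * (∑ x, p x * (s f x * s f' x)) ^ 2) := by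
  set D : F → ℝ := fun f => ∑ x, p x * (h x * s f x) with hD
  set E : ℝ := ∑ f, q f * D f ^ 2 with hE
  set K : ℝ := ∑ f, ∑ f', q f * q f' * (∑ x, p x * (s f x * s f' x)) ^ 2 with hK
  set N : ℝ := ∑ x, p x * h x ^ 2 with hN
  have hE0 : 0 ≤ E := Finset.sum_nonneg fun f _ => mul_nonneg (hq f) (sq_nonneg _)
  have hN0 : 0 ≤ N := Finset.sum_nonneg fun x _ => mul_nonneg (hp x) (sq_nonneg _)
  have hEx : E = ∑ x, p x * (h x * ∑ f, q f * (s f x * D f)) := by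
    calc E = ∑ f, ∑ x, p x * (h x * (q f * (s f x * D f))) := by
          refine Finset.sum_congr rfl fun f _ => ?_
          rw [sq, ← mul_assoc]
          nth_rewrite 2 [hD]
          rw [Finset.mul_sum]
          exact Finset.sum_congr rfl fun x _ => by ring
      _ = _ := by
          rw [Finset.sum_comm]
          simp only [Finset.mul_sum]
  have hM : ∑ x, p x * (∑ f, q f * (s f x * D f)) ^ 2
      = ∑ z : F × F, (q z.1 * q z.2) * ((D z.1 * D z.2) * ∑ x, p x * (s z.1 x * s z.2 x)) := by
    rw [Fintype.sum_prod_type]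
    calc ∑ x, p x * (∑ f, q f * (s f x * D f)) ^ 2
        = ∑ x, ∑ f, ∑ f', p x * ((q f * (s f x * D f)) * (q f' * (s f' x * D f'))) := by
          refine Finset.sum_congr rfl fun x _ => ?_
          rw [sq, Finset.sum_mul_sum]
          simp only [Finset.mul_sum]
      _ = ∑ f, ∑ f', ∑ x, p x * ((q f * (s f x * D f)) * (q f' * (s f' x * D f'))) := by
          rw [Finset.sum_comm]
          exact Finset.sum_congr rfl fun f _ => Finset.sum_comm
      _ = _ := by
          refine Finset.sum_congr rfl fun f _ => Finset.sum_congr rfl fun f' _ => ?_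
          simp only [Finset.mul_sum]
          exact Finset.sum_congr rfl fun x _ => by ring
  set M : ℝ := ∑ x, p x * (∑ f, q f * (s f x * D f)) ^ 2 with hMdef
  have h1 : E ^ 2 ≤ N * M := by
    rw [hEx]
    exact weighted_cauchy_schwarz _ p h _ hp
  have h2 : M ^ 2 ≤ E ^ 2 * K := by
    have hEE : ∑ z : F × F, (q z.1 * q z.2) * (D z.1 * D z.2) ^ 2 = E ^ 2 := by
      rw [Fintype.sum_prod_type, sq E, hE, Finset.sum_mul_sum]
      exact Finset.sum_congr rfl fun f _ => Finset.sum_congr rfl fun f' _ => by ring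
    have hKK : ∑ z : F × F, (q z.1 * q z.2) * (∑ x, p x * (s z.1 x * s z.2 x)) ^ 2 = K := by
      rw [Fintype.sum_prod_type]
    rw [hM, ← hEE, ← hKK]
    exact weighted_cauchy_schwarz _ (fun z : F × F => q z.1 * q z.2) _ _
      (fun z => mul_nonneg (hq _) (hq _))
  have h3 : M ≤ E * Real.sqrt K := by
    calc M ≤ Real.sqrt (E ^ 2 * K) := Real.le_sqrt_of_sq_le h2
      _ = E * Real.sqrt K := by rw [Real.sqrt_mul (sq_nonneg E), Real.sqrt_sq hE0]
  rcases hE0.eq_or_lt with h0 | hpos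
  · rw [← h0]
    exact mul_nonneg hN0 (Real.sqrt_nonneg _)
  · refine le_of_mul_le_mul_left ?_ hpos
    calc E * E = E ^ 2 := (sq E).symm
      _ ≤ N * M := h1
      _ ≤ N * (E * Real.sqrt K) := mul_le_mul_of_nonneg_left h3 hN0
      _ = E * (N * Real.sqrt K) := by ring

theorem stmt0 {𝒳 : Type*} [Fintype 𝒳] [DecidableEq 𝒳]
    (PX : 𝒳 → ℝ) (hPX0 : ∀ x, 0 ≤ PX x) (hPX1 : ∑ x : 𝒳, PX x = 1)
    (PF : (𝒳 → Bool) → ℝ) (hPF0 : ∀ f, 0 ≤ PF f) (hPF1 : ∑ f : 𝒳 → Bool, PF f = 1)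
    (g : 𝒳 × Bool → Bool) :
    -- Var_F(P[W=1|F]) ≤ E_F[(P_X[g(X,F(X))=1] − P[g(X̃,Ỹ)=1])²]
    (∑ f : 𝒳 → Bool, PF f *
        ((∑ x : 𝒳, PX x * (if g (x, f x) = true then (1 : ℝ) else 0)) -
          ∑ f' : 𝒳 → Bool, PF f' *
            ∑ x : 𝒳, PX x * (if g (x, f' x) = true then (1 : ℝ) else 0)) ^ 2 ≤
      ∑ f : 𝒳 → Bool, PF f *
        ((∑ x : 𝒳, PX x * (if g (x, f x) = true then (1 : ℝ) else 0)) -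
          ∑ x : 𝒳, ∑ y : Bool,
            (PX x * (1 / 2)) * (if g (x, y) = true then (1 : ℝ) else 0)) ^ 2)
    ∧
    -- E_F[(…)²] ≤ min(P[g(X̃,Ỹ)=1], P[g(X̃,Ỹ)=0]) · √(Pred(P_X,P_F))
    (∑ f : 𝒳 → Bool, PF f *
        ((∑ x : 𝒳, PX x * (if g (x, f x) = true then (1 : ℝ) else 0)) -
          ∑ x : 𝒳, ∑ y : Bool,
            (PX x * (1 / 2)) * (if g (x, y) = true then (1 : ℝ) else 0)) ^ 2 ≤
      min (∑ x : 𝒳, ∑ y : Bool, (PX x * (1 / 2)) * (if g (x, y) = true then (1 : ℝ) else 0))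
          (∑ x : 𝒳, ∑ y : Bool, (PX x * (1 / 2)) * (if g (x, y) = false then (1 : ℝ) else 0)) *
        Real.sqrt (crossPred PX PF)) := by
  refine ⟨variance_le_sq_dev PF _ hPF1 _, ?_⟩
  set h : 𝒳 → ℝ := fun x =>
    ((if g (x, true) = true then (1 : ℝ) else 0) - (if g (x, false) = true then 1 else 0)) / 2
    with hh
  set s : (𝒳 → Bool) → 𝒳 → ℝ := fun f x => if f x = true then 1 else -1 with hs
  have hdev : ∀ f : 𝒳 → Bool,
      (∑ x : 𝒳, PX x * (if g (x, f x) = true then (1 : ℝ) else 0)) -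
          ∑ x : 𝒳, ∑ y : Bool, (PX x * (1 / 2)) * (if g (x, y) = true then (1 : ℝ) else 0)
        = ∑ x, PX x * (h x * s f x) := by
    intro f
    rw [← Finset.sum_sub_distrib]
    refine Finset.sum_congr rfl fun x _ => ?_
    simp only [hh, hs, Fintype.sum_bool]
    cases f x <;> cases g (x, true) <;> cases g (x, false) <;> norm_num <;> ring
  have hpred : crossPred PX PF
      = ∑ f, ∑ f', PF f * PF f' * (∑ x, PX x * (s f x * s f' x)) ^ 2 := by
    unfold crossPred
    refine Finset.sum_congr rfl fun f _ => Finset.sum_congr rfl fun f' _ => ?_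
    congr 2
    refine Finset.sum_congr rfl fun x _ => ?_
    simp only [hs]
    cases f x <;> cases f' x <;> simp
  simp only [hdev]
  rw [hpred]
  refine (second_moment_le PX PF hPX0 hPF0 h s).trans
    (mul_le_mul_of_nonneg_right (le_min ?_ ?_) (Real.sqrt_nonneg _))
  all_goals
    refine Finset.sum_le_sum fun x _ => ?_
    have hx := hPX0 x
    simp only [hh, Fintype.sum_bool]
    cases g (x, true) <;> cases g (x, false) <;> norm_num <;> linarith
end

section
/- Let 𝒳 be a finite set, P_X a probability distribution on 𝒳, P_F a probability distribution on the set of functions from 𝒳 to {0,1}, and m a positive integer. Let (X,F) ~ P_X × P_F and W = g(X, F(X)) for a function g : 𝒳 × {0,1} → [m]. Then E_F[ Σ_{i∈[m]} (P[W=i | F] − P[W=i])² ] ≤ √(Pred(P_X, P_F)). -/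
/-!
Write `s_f(x) = ±1` for the sign of `f x`. For each `i`, the indicator of `g (x, f x) = i` is
`a_i(x) + b_i(x) s_f(x)`, where `b_i(x)` is half the difference of the indicators of
`g (x, true) = i` and `g (x, false) = i`. The variance of `P[W = i | F]` is at most its second
moment about the constant `E_X a_i(X)`, which is `E_F (E_X b_i(X) s_F(X))²`. Summed over `i` this
is `E_{X,Y} K(X,Y) M(X,Y)` with `K(x,y) = ∑_i b_i(x) b_i(y)` and `M(x,y) = E_F s_F(x) s_F(y)`.
Since `|K| ≤ 1` (`abs_sum_halfDiff_mul_le`), this is at most `E |M| ≤ √(E M²)`, and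
`E M²` is exactly the cross-predictability (`crossPred_eq`).
-/

open Finset

/-- The sign `1` or `-1` of a Boolean value. -/
def boolSign (b : Bool) : ℝ := if b then 1 else -1

/-- Half the difference of the indicators of `g (x, true) = i` and `g (x, false) = i`: the
coefficient of the sign of `b` in the indicator of `g (x, b) = i`. -/
noncomputable def halfDiff {𝒳 : Type*} {m : ℕ} (g : 𝒳 × Bool → Fin m) (i : Fin m) (x : 𝒳) : ℝ :=
  ((if g (x, true) = i then 1 else 0) - (if g (x, false) = i then 1 else 0)) / 2

/-- The mean minimizes the weighted second moment. -/
lemma sum_mul_sub_mean_sq_le {α : Type*} [Fintype α] (w : α → ℝ) (hw : ∑ a, w a = 1)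
    (p : α → ℝ) (c : ℝ) :
    ∑ a, w a * (p a - ∑ a', w a' * p a') ^ 2 ≤ ∑ a, w a * (p a - c) ^ 2 := by
  set μ := ∑ a', w a' * p a' with hμ
  have key : ∀ d : ℝ, ∑ a, w a * (p a - d) ^ 2 = ∑ a, w a * p a ^ 2 - 2 * d * μ + d ^ 2 := by
    intro d
    have h : ∀ a, w a * (p a - d) ^ 2
        = w a * p a ^ 2 - 2 * d * (w a * p a) + d ^ 2 * w a := fun a => by ring
    simp only [h, sum_add_distrib, sum_sub_distrib, ← mul_sum, hw, ← hμ, mul_one]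
  rw [key, key]
  nlinarith [sq_nonneg (μ - c)]

lemma sum_mul_le_sqrt {α : Type*} [Fintype α] (w : α → ℝ) (hw0 : ∀ a, 0 ≤ w a)
    (hw : ∑ a, w a = 1) (p : α → ℝ) :
    ∑ a, w a * p a ≤ Real.sqrt (∑ a, w a * p a ^ 2) := by
  apply Real.le_sqrt_of_sq_le
  set μ := ∑ a', w a' * p a' with hμ
  have h0 : 0 ≤ ∑ a, w a * (p a - μ) ^ 2 :=
    sum_nonneg fun a _ => mul_nonneg (hw0 a) (sq_nonneg _)
  have h : ∀ a, w a * (p a - μ) ^ 2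
      = w a * p a ^ 2 - 2 * μ * (w a * p a) + μ ^ 2 * w a := fun a => by ring
  simp only [h, sum_add_distrib, sum_sub_distrib, ← mul_sum, hw, ← hμ, mul_one] at h0
  nlinarith

lemma abs_sum_halfDiff_mul_le {𝒳 : Type*} {m : ℕ} (g : 𝒳 × Bool → Fin m) (x y : 𝒳) :
    |∑ i, halfDiff g i x * halfDiff g i y| ≤ 1 := by
  calc |∑ i, halfDiff g i x * halfDiff g i y|
      ≤ ∑ i, |halfDiff g i x * halfDiff g i y| := abs_sum_le_sum_abs _ _
    _ ≤ ∑ i, ((if g (x, true) = i then (1 : ℝ) else 0) / 2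
          + (if g (x, false) = i then (1 : ℝ) else 0) / 2) := by
        refine sum_le_sum fun i _ => ?_
        unfold halfDiff
        split_ifs <;> norm_num [abs_le]
    _ = 1 := by
        rw [sum_add_distrib, ← sum_div, ← sum_div]
        simp
        norm_num

lemma sum_sq_eq_pairs {α : Type*} [Fintype α] (u : α → ℝ) :
    (∑ a, u a) ^ 2 = ∑ z : α × α, u z.1 * u z.2 := by
  rw [sq, Fintype.sum_mul_sum, Fintype.sum_prod_type]

/-- The cross-predictability is the second moment of the correlation kernel
`M(x,y) = E_F s_F(x) s_F(y)` over independent `x` and `y`. -/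
lemma crossPred_eq {𝒳 : Type*} [Fintype 𝒳] [DecidableEq 𝒳]
    (PX : 𝒳 → ℝ) (PF : (𝒳 → Bool) → ℝ) :
    crossPred PX PF = ∑ z : 𝒳 × 𝒳, PX z.1 * PX z.2 *
      (∑ f, PF f * (boolSign (f z.1) * boolSign (f z.2))) ^ 2 := by
  have hs : ∀ b c : Bool, (if b = c then (1 : ℝ) else -1) = boolSign b * boolSign c := by
    intro b c
    cases b <;> cases c <;> simp [boolSign]
  unfold crossPred
  simp only [hs, sum_sq_eq_pairs, mul_sum]
  rw [sum_comm, ← Fintype.sum_prod_type', sum_comm]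
  refine sum_congr rfl fun z _ => sum_congr rfl fun q _ => ?_
  ring

theorem stmt1 {𝒳 : Type*} [Fintype 𝒳] [DecidableEq 𝒳]
    (PX : 𝒳 → ℝ) (hPX0 : ∀ x, 0 ≤ PX x) (hPX1 : ∑ x : 𝒳, PX x = 1)
    (PF : (𝒳 → Bool) → ℝ) (hPF0 : ∀ f, 0 ≤ PF f) (hPF1 : ∑ f : 𝒳 → Bool, PF f = 1)
    (m : ℕ) (hm : 0 < m) (g : 𝒳 × Bool → Fin m) :
    -- E_F[ Σ_{i∈[m]} (P[W=i|F] − P[W=i])² ] ≤ √(Pred(P_X,P_F))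
    ∑ f : 𝒳 → Bool, PF f *
        ∑ i : Fin m,
          ((∑ x : 𝒳, PX x * (if g (x, f x) = i then (1 : ℝ) else 0)) -
            ∑ f' : 𝒳 → Bool, PF f' *
              ∑ x : 𝒳, PX x * (if g (x, f' x) = i then (1 : ℝ) else 0)) ^ 2 ≤
      Real.sqrt (crossPred PX PF) := by
  -- The constant part `E_X a_i(X)`, about which the second moment is taken.
  set A : Fin m → ℝ := fun i => ∑ x, PX x *
    (((if g (x, true) = i then 1 else 0) + (if g (x, false) = i then 1 else 0)) / 2) with hA
  set M : 𝒳 × 𝒳 → ℝ := fun z => ∑ f, PF f * (boolSign (f z.1) * boolSign (f z.2)) with hM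
  have hdec : ∀ (f : 𝒳 → Bool) (i : Fin m),
      (∑ x : 𝒳, PX x * (if g (x, f x) = i then (1 : ℝ) else 0)) - A i
      = ∑ x, PX x * (halfDiff g i x * boolSign (f x)) := by
    intro f i
    rw [hA, ← sum_sub_distrib]
    refine sum_congr rfl fun x _ => ?_
    rw [← mul_sub]
    congr 1
    cases f x <;> simp [halfDiff, boolSign] <;> ring
  have hw : ∑ z : 𝒳 × 𝒳, PX z.1 * PX z.2 = 1 := by
    rw [← sum_sq_eq_pairs, hPX1, one_pow]
  calc _ = ∑ i : Fin m, ∑ f : 𝒳 → Bool, PF f *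
          ((∑ x : 𝒳, PX x * (if g (x, f x) = i then (1 : ℝ) else 0)) -
            ∑ f' : 𝒳 → Bool, PF f' *
              ∑ x : 𝒳, PX x * (if g (x, f' x) = i then (1 : ℝ) else 0)) ^ 2 := by
        simp only [mul_sum (s := (univ : Finset (Fin m)))]
        exact sum_comm
    _ ≤ ∑ i : Fin m, ∑ f : 𝒳 → Bool, PF f *
          ((∑ x : 𝒳, PX x * (if g (x, f x) = i then (1 : ℝ) else 0)) - A i) ^ 2 :=
        sum_le_sum fun i _ => sum_mul_sub_mean_sq_le PF hPF1 _ (A i)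
    _ = ∑ z : 𝒳 × 𝒳, PX z.1 * PX z.2 *
          ((∑ i, halfDiff g i z.1 * halfDiff g i z.2) * M z) := by
        simp only [hdec, sum_sq_eq_pairs, hM, sum_mul_sum]
        simp only [mul_sum]
        rw [← Fintype.sum_prod_type', sum_comm]
        refine sum_congr rfl fun z _ => ?_
        rw [← Fintype.sum_prod_type']
        refine sum_congr rfl fun q _ => ?_
        ring
    _ ≤ ∑ z : 𝒳 × 𝒳, PX z.1 * PX z.2 * |M z| := by
        refine sum_le_sum fun z _ => ?_
        refine mul_le_mul_of_nonneg_left ?_ (mul_nonneg (hPX0 _) (hPX0 _))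
        refine (le_abs_self _).trans ?_
        rw [abs_mul]
        exact mul_le_of_le_one_left (abs_nonneg _) (abs_sum_halfDiff_mul_le g z.1 z.2)
    _ ≤ Real.sqrt (∑ z : 𝒳 × 𝒳, PX z.1 * PX z.2 * |M z| ^ 2) :=
        sum_mul_le_sqrt _ (fun z => mul_nonneg (hPX0 _) (hPX0 _)) hw _
    _ = Real.sqrt (crossPred PX PF) := by
        simp only [sq_abs, crossPred_eq, hM]
end

section
/- Let m, n be positive integers. Let P_X be the uniform distribution on {−1,1}^n and let P_F be the uniform distribution on the set of 2^n parity functions {p_s : s ⊆ [n]}. Let (X,F) ~ P_X × P_F and W = g(X, F(X)) for a function g : {−1,1}^n × {−1,1} → [m]. Then Σ_{i∈[m]} Σ_{s⊆[n]} (P[W=i, F=p_s] − P[W=i]·2^{−n})² ≤ 2^{−3n/2}, and Σ_{i∈[m]} Σ_{s⊆[n]} |P[W=i, F=p_s] − P[W=i]·2^{−n}| ≤ √m · 2^{−n/4}. -/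
/-!
Write `N = 2 ^ n`. Since `p_s(x)` is a sign, the indicator of `g (x, p_s(x)) = i` is an affine
function of it: `u_i(x) + v_i(x) * p_s(x)` with `v_i(x) = (1[g(x,1)=i] - 1[g(x,-1)=i]) / 2`.
Summing over `x`, the dependence on `s` is only through the Fourier transform
`V_i(s) = ∑ x, v_i(x) * p_s(x)`, and the deviation `P[W=i, F=p_s] - P[W=i] / N` is `N⁻²` times
`V_i(s)` minus its mean over `s`. Discarding the mean only increases the sum of squares, and
Parseval (`sum_sq_fourier`) gives `∑ s, V_i(s) ^ 2 = N * ∑ x, v_i(x) ^ 2`. Each `x` satisfies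
`∑ i, v_i(x) ^ 2 ≤ 1`, so the total sum of squares is at most `N⁻²`, which is below `N ^ (-3/2)`.
The `ℓ¹` bound follows by Cauchy-Schwarz over the `m * N` pairs `(i, s)`.
-/

open Finset

/-- The parity function indexed by `s ⊆ [n]`, on the hypercube encoded by `Bool` coordinates
(`b i = true` encoding the coordinate value `-1`): `p_s(x) = ∏_{i∈s} x_i` corresponds to the
`xor` of the bits in `s`. -/
def parity {n : ℕ} (s : Finset (Fin n)) (x : Fin n → Bool) : Bool :=
  decide (Odd (s.filter fun i => x i = true).card)

/-- The real sign encoded by a bit: `true` stands for `-1`. -/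
noncomputable def bitSign (b : Bool) : ℝ := if b = true then -1 else 1

theorem bitSign_parity {n : ℕ} (s : Finset (Fin n)) (x : Fin n → Bool) :
    bitSign (parity s x) = ∏ i ∈ s, bitSign (x i) := by
  unfold bitSign parity
  rw [Finset.prod_ite]
  simp only [Finset.prod_const, one_pow, mul_one, decide_eq_true_eq]
  split_ifs with h
  · exact h.neg_one_pow.symm
  · exact (Nat.not_odd_iff_even.mp h).neg_one_pow.symm

/-- Orthogonality of the columns of the parity matrix, from expanding
`∏ i, (1 + x_i * y_i)`. -/
theorem sum_bitSign_mul {n : ℕ} (x y : Fin n → Bool) :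
    ∑ s : Finset (Fin n), bitSign (parity s x) * bitSign (parity s y)
      = if x = y then (2 : ℝ) ^ n else 0 := by
  simp only [bitSign_parity, ← Finset.prod_mul_distrib]
  have h := Finset.prod_one_add (f := fun i => bitSign (x i) * bitSign (y i))
    (Finset.univ : Finset (Fin n))
  rw [Finset.powerset_univ] at h
  rw [← h]
  split_ifs with hxy
  · subst hxy
    have : ∀ i, 1 + bitSign (x i) * bitSign (x i) = 2 := by
      intro i
      cases x i <;> norm_num [bitSign]
    simp [this]
  · obtain ⟨i, hi⟩ := Function.ne_iff.mp hxy
    refine Finset.prod_eq_zero (Finset.mem_univ i) ?_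
    revert hi
    cases x i <;> cases y i <;> norm_num [bitSign]

/-- Parseval's identity for the unnormalized Fourier transform on the hypercube. -/
theorem sum_sq_fourier {n : ℕ} (v : (Fin n → Bool) → ℝ) :
    ∑ s : Finset (Fin n), (∑ x, v x * bitSign (parity s x)) ^ 2
      = (2 : ℝ) ^ n * ∑ x, v x ^ 2 := by
  calc ∑ s : Finset (Fin n), (∑ x, v x * bitSign (parity s x)) ^ 2
      = ∑ s : Finset (Fin n), ∑ x, ∑ y,
          v x * v y * (bitSign (parity s x) * bitSign (parity s y)) := by
        refine Finset.sum_congr rfl fun s _ => ?_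
        rw [sq, Finset.sum_mul_sum]
        refine Finset.sum_congr rfl fun x _ => Finset.sum_congr rfl fun y _ => ?_
        ring
    _ = ∑ x, ∑ y, v x * v y *
          ∑ s : Finset (Fin n), bitSign (parity s x) * bitSign (parity s y) := by
        rw [Finset.sum_comm]
        refine Finset.sum_congr rfl fun x _ => ?_
        rw [Finset.sum_comm]
        simp only [Finset.mul_sum]
    _ = (2 : ℝ) ^ n * ∑ x, v x ^ 2 := by
        simp only [sum_bitSign_mul, mul_ite, mul_zero, Finset.sum_ite_eq, Finset.mem_univ,
          if_true, Finset.mul_sum]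
        refine Finset.sum_congr rfl fun x _ => ?_
        ring

/-- Subtracting the mean does not increase the sum of squares. -/
theorem sum_sq_sub_mean_le {ι : Type*} [Fintype ι] (N : ℝ) (hN : 0 < N)
    (hcard : (Fintype.card ι : ℝ) = N) (V : ι → ℝ) :
    ∑ s, (V s - N⁻¹ * ∑ t, V t) ^ 2 ≤ ∑ s, V s ^ 2 := by
  set S := ∑ t, V t with hS
  have h : ∑ s, (V s - N⁻¹ * S) ^ 2 = ∑ s, V s ^ 2 - N⁻¹ * S ^ 2 := by
    have e : ∀ s, (V s - N⁻¹ * S) ^ 2 = V s ^ 2 - 2 * N⁻¹ * S * V s + (N⁻¹ * S) ^ 2 := by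
      intro s
      ring
    simp only [e, Finset.sum_add_distrib, Finset.sum_sub_distrib, ← Finset.mul_sum,
      Finset.sum_const, Finset.card_univ, nsmul_eq_mul, hcard, ← hS]
    field_simp
    ring
  rw [h]
  have : 0 ≤ N⁻¹ * S ^ 2 := by positivity
  linarith

/-- The bound for one value of `W`; `a x b` plays the role of the indicator of `g (x, b) = i`. -/
theorem sum_sq_deviation_le {n : ℕ} (a : (Fin n → Bool) → Bool → ℝ) :
    ∑ s : Finset (Fin n),
        (((2 : ℝ) ^ n)⁻¹ * (((2 : ℝ) ^ n)⁻¹ * ∑ x : Fin n → Bool, a x (parity s x)) -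
          (∑ t : Finset (Fin n), ((2 : ℝ) ^ n)⁻¹ * (((2 : ℝ) ^ n)⁻¹ *
              ∑ x : Fin n → Bool, a x (parity t x))) * ((2 : ℝ) ^ n)⁻¹) ^ 2
      ≤ (((2 : ℝ) ^ n)⁻¹) ^ 3 * ∑ x, ((a x false - a x true) / 2) ^ 2 := by
  set v : (Fin n → Bool) → ℝ := fun x => (a x false - a x true) / 2 with hv
  set U : ℝ := ∑ x, (a x false + a x true) / 2 with hU
  set V : Finset (Fin n) → ℝ := fun s => ∑ x, v x * bitSign (parity s x) with hV
  have hA : ∀ s : Finset (Fin n), ∑ x, a x (parity s x) = U + V s := by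
    intro s
    rw [hU, hV, ← Finset.sum_add_distrib]
    refine Finset.sum_congr rfl fun x _ => ?_
    simp only [hv]
    cases parity s x <;> norm_num [bitSign] <;> ring
  have hP : ∑ s, V s ^ 2 = (2 : ℝ) ^ n * ∑ x, v x ^ 2 := sum_sq_fourier v
  have hcard : (Fintype.card (Finset (Fin n)) : ℝ) = (2 : ℝ) ^ n := by simp
  have hN : (0 : ℝ) < 2 ^ n := by positivity
  have hM := sum_sq_sub_mean_le _ hN hcard V
  rw [hP] at hM
  simp only [hA]
  generalize (2 : ℝ) ^ n = N at *
  have e : ∀ s, (N⁻¹ * (N⁻¹ * (U + V s)) - (∑ t, N⁻¹ * (N⁻¹ * (U + V t))) * N⁻¹) ^ 2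
      = N⁻¹ ^ 4 * (V s - N⁻¹ * ∑ t, V t) ^ 2 := by
    intro s
    simp only [← Finset.mul_sum, Finset.sum_add_distrib, Finset.sum_const, Finset.card_univ,
      nsmul_eq_mul, hcard]
    field_simp
    ring
  rw [Finset.sum_congr rfl fun s _ => e s, ← Finset.mul_sum]
  calc N⁻¹ ^ 4 * ∑ s, (V s - N⁻¹ * ∑ t, V t) ^ 2
      ≤ N⁻¹ ^ 4 * (N * ∑ x, v x ^ 2) := by gcongr
    _ = N⁻¹ ^ 3 * ∑ x, v x ^ 2 := by field_simp

/-- Half the difference of two point masses on `Fin m` has squared `ℓ²` norm at most `1`: each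
summand is at most the average of the two masses, since these lie in `{0, 1}`. -/
theorem sum_sq_half_sub_le_one {m : ℕ} (j k : Fin m) :
    ∑ i : Fin m, (((if j = i then (1 : ℝ) else 0) - (if k = i then (1 : ℝ) else 0)) / 2) ^ 2
      ≤ 1 := by
  calc _ ≤ ∑ i : Fin m,
        ((if j = i then (1 : ℝ) else 0) / 2 + (if k = i then (1 : ℝ) else 0) / 2) := by
        refine Finset.sum_le_sum fun i _ => ?_
        split_ifs <;> norm_num
    _ = 1 := by
        rw [Finset.sum_add_distrib, ← Finset.sum_div, ← Finset.sum_div]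
        simp only [Finset.sum_ite_eq, Finset.mem_univ, if_true]
        norm_num

theorem stmt3 (n m : ℕ) (hn : 0 < n) (hm : 0 < m)
    (g : (Fin n → Bool) × Bool → Fin m) :
    -- P[W=i, F=p_s] = 2^{-n} · (2^{-n} Σ_x 1[g(x,p_s(x))=i]),
    -- P[W=i] = Σ_t 2^{-n} · (2^{-n} Σ_x 1[g(x,p_t(x))=i]), P[F=p_s] = 2^{-n}
    (∑ i : Fin m, ∑ s : Finset (Fin n),
        (((2 : ℝ) ^ n)⁻¹ * (((2 : ℝ) ^ n)⁻¹ *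
            ∑ x : Fin n → Bool, (if g (x, parity s x) = i then (1 : ℝ) else 0)) -
          (∑ t : Finset (Fin n), ((2 : ℝ) ^ n)⁻¹ * (((2 : ℝ) ^ n)⁻¹ *
              ∑ x : Fin n → Bool, (if g (x, parity t x) = i then (1 : ℝ) else 0))) *
            ((2 : ℝ) ^ n)⁻¹) ^ 2 ≤
      (2 : ℝ) ^ (-(3 * (n : ℝ)) / 2))
    ∧
    (∑ i : Fin m, ∑ s : Finset (Fin n),
        |((2 : ℝ) ^ n)⁻¹ * (((2 : ℝ) ^ n)⁻¹ *
            ∑ x : Fin n → Bool, (if g (x, parity s x) = i then (1 : ℝ) else 0)) -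
          (∑ t : Finset (Fin n), ((2 : ℝ) ^ n)⁻¹ * (((2 : ℝ) ^ n)⁻¹ *
              ∑ x : Fin n → Bool, (if g (x, parity t x) = i then (1 : ℝ) else 0))) *
            ((2 : ℝ) ^ n)⁻¹| ≤
      Real.sqrt m * (2 : ℝ) ^ (-(n : ℝ) / 4)) := by
  have key : ∀ i : Fin m, _ := fun i =>
    sum_sq_deviation_le (n := n) fun x b => if g (x, b) = i then (1 : ℝ) else 0
  have hL2 := Finset.sum_le_sum fun i (_ : i ∈ (Finset.univ : Finset (Fin m))) => key i
  have hbound : ∑ i : Fin m, (((2 : ℝ) ^ n)⁻¹) ^ 3 * ∑ x : Fin n → Bool,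
      (((if g (x, false) = i then (1 : ℝ) else 0) - (if g (x, true) = i then (1 : ℝ) else 0)) / 2)
        ^ 2 ≤ (2 : ℝ) ^ (-(3 * (n : ℝ)) / 2) := by
    rw [← Finset.mul_sum, Finset.sum_comm]
    calc _ ≤ (((2 : ℝ) ^ n)⁻¹) ^ 3 * ∑ x : Fin n → Bool, (1 : ℝ) := by
          gcongr with x
          exact sum_sq_half_sub_le_one _ _
      _ = (2 : ℝ) ^ (-(2 * (n : ℝ))) := by
          rw [Real.rpow_neg (by norm_num), Real.rpow_mul (by norm_num), Real.rpow_natCast]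
          norm_num
          rw [show (4 : ℝ) = 2 * 2 by norm_num, mul_pow]
          field_simp
      _ ≤ _ := by
          refine Real.rpow_le_rpow_of_exponent_le (by norm_num) ?_
          have : (0 : ℝ) ≤ n := n.cast_nonneg
          linarith
  have h1 := hL2.trans hbound
  refine ⟨h1, ?_⟩
  generalize hD : (fun (i : Fin m) (s : Finset (Fin n)) =>
    (((2 : ℝ) ^ n)⁻¹ * (((2 : ℝ) ^ n)⁻¹ *
            ∑ x : Fin n → Bool, (if g (x, parity s x) = i then (1 : ℝ) else 0)) -
          (∑ t : Finset (Fin n), ((2 : ℝ) ^ n)⁻¹ * (((2 : ℝ) ^ n)⁻¹ *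
              ∑ x : Fin n → Bool, (if g (x, parity t x) = i then (1 : ℝ) else 0))) *
            ((2 : ℝ) ^ n)⁻¹)) = D
  have hD' := fun i s => congrFun (congrFun hD i) s
  beta_reduce at hD'
  simp only [hD'] at h1 ⊢
  rw [← Fintype.sum_prod_type' (f := fun i s => D i s ^ 2)] at h1
  rw [← Fintype.sum_prod_type' (f := fun i s => |D i s|)]
  have hcs := sq_sum_le_card_mul_sum_sq (s := (Finset.univ : Finset (Fin m × Finset (Fin n))))
    (f := fun p => |D p.1 p.2|)
  simp only [sq_abs, Finset.card_univ, Fintype.card_prod, Fintype.card_fin,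
    Fintype.card_finset, Nat.cast_mul, Nat.cast_pow, Nat.cast_ofNat] at hcs
  refine abs_le_of_sq_le_sq' (hcs.trans ?_) (by positivity) |>.2
  calc _ ≤ (m : ℝ) * 2 ^ n * (2 : ℝ) ^ (-(3 * (n : ℝ)) / 2) := by gcongr
    _ = _ := by
      rw [mul_pow, Real.sq_sqrt m.cast_nonneg, mul_assoc, ← Real.rpow_natCast,
        ← Real.rpow_add (by norm_num), ← Real.rpow_natCast ((2 : ℝ) ^ _),
        ← Real.rpow_mul (by norm_num)]
      congr 2
      push_cast
      ring
end

section
/- Let m, n be positive integers and g : {0,1}^n × {0,1} → [m] be any function. Let X be uniform on {0,1}^n, and let (X̃,Ỹ) be uniform on {0,1}^{n+1} and independent of X. Then Σ_{i∈[m]} Σ_{s⊆[n]} (P[g(X, p_s(X)) = i] − P[g(X̃,Ỹ) = i])² ≤ 2^{n/2}. -/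
/-!
Write `χ_s(x) = (-1)^{p_s(x)}` and `h_i(x) = 1[g(x,0)=i] - 1[g(x,1)=i]`. Since
`1[g(x,p_s(x))=i] - (1[g(x,0)=i] + 1[g(x,1)=i])/2 = χ_s(x) h_i(x) / 2`, the difference of
probabilities for `(i, s)` is half the Fourier coefficient of `h_i` at `s`. Parseval's identity
(`parseval`, resting on the orthogonality relation `sum_chi_mul_chi`) turns the sum over `s` into
`2^{-n} ∑_x h_i(x)² / 4`. For each `x`, `∑_i h_i(x)² ≤ 2`, so the whole sum is at most
`1/2`, which is below `2^{n/2}`.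
-/

open Finset

/-- The Walsh character `χ_s(x) = ∏_{i ∈ s} (-1)^{x_i}`. -/
def chi {n : ℕ} (s : Finset (Fin n)) (x : Fin n → Bool) : ℝ :=
  ∏ i ∈ s, if x i = true then (-1 : ℝ) else 1

lemma chi_eq_parity {n : ℕ} (s : Finset (Fin n)) (x : Fin n → Bool) :
    chi s x = if parity s x = true then -1 else 1 := by
  unfold chi parity
  rw [Finset.prod_ite]
  simp only [prod_const, one_pow, mul_one, decide_eq_true_eq]
  split_ifs with h
  · exact h.neg_one_pow
  · exact (Nat.not_odd_iff_even.mp h).neg_one_pow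

/-- Orthogonality of the characters, summed over the index `s`. It follows by expanding
`∏_i (1 + (-1)^{x_i} (-1)^{y_i})`. -/
lemma sum_chi_mul_chi {n : ℕ} (x y : Fin n → Bool) :
    ∑ s : Finset (Fin n), chi s x * chi s y = if x = y then (2 : ℝ) ^ n else 0 := by
  have key : ∑ s : Finset (Fin n), chi s x * chi s y =
      ∏ i : Fin n, (1 + (if x i = true then (-1 : ℝ) else 1) *
        (if y i = true then (-1 : ℝ) else 1)) := by
    rw [Finset.prod_one_add, Finset.powerset_univ]
    simp only [chi, Finset.prod_mul_distrib]
  rw [key]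
  split_ifs with h
  · subst h
    have : ∀ i : Fin n, (1 + (if x i = true then (-1 : ℝ) else 1) *
        (if x i = true then (-1 : ℝ) else 1)) = 2 := by
      intro i
      split_ifs <;> norm_num
    simp only [this, Finset.prod_const, Finset.card_univ, Fintype.card_fin]
  · obtain ⟨i, hi⟩ := Function.ne_iff.mp h
    apply Finset.prod_eq_zero (Finset.mem_univ i)
    cases hx : x i <;> cases hy : y i <;> simp_all

lemma parseval {n : ℕ} (h : (Fin n → Bool) → ℝ) :
    ∑ s : Finset (Fin n), (∑ x, chi s x * h x) ^ 2 = 2 ^ n * ∑ x, h x ^ 2 := by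
  calc ∑ s : Finset (Fin n), (∑ x, chi s x * h x) ^ 2
      = ∑ s : Finset (Fin n), ∑ x, ∑ y, (h x * h y) * (chi s x * chi s y) := by
        refine Finset.sum_congr rfl fun s _ => ?_
        rw [sq, Finset.sum_mul_sum]
        refine Finset.sum_congr rfl fun x _ => Finset.sum_congr rfl fun y _ => ?_
        ring
    _ = ∑ x, ∑ y, (h x * h y) * ∑ s : Finset (Fin n), chi s x * chi s y := by
        rw [Finset.sum_comm]
        refine Finset.sum_congr rfl fun x _ => ?_
        rw [Finset.sum_comm]
        simp only [Finset.mul_sum]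
    _ = 2 ^ n * ∑ x, h x ^ 2 := by
        simp only [sum_chi_mul_chi, mul_ite, mul_zero, Finset.sum_ite_eq, Finset.mem_univ,
          if_true, Finset.mul_sum]
        refine Finset.sum_congr rfl fun x _ => ?_
        ring

/-- The signed difference `h_i(x) = 1[g(x,0)=i] - 1[g(x,1)=i]`. -/
def bias {n m : ℕ} (g : (Fin n → Bool) × Bool → Fin m) (i : Fin m) (x : Fin n → Bool) : ℝ :=
  (if g (x, false) = i then 1 else 0) - (if g (x, true) = i then 1 else 0)

lemma sum_bias_sq_le {n m : ℕ} (g : (Fin n → Bool) × Bool → Fin m) (x : Fin n → Bool) :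
    ∑ i, bias g i x ^ 2 ≤ 2 := by
  calc ∑ i, bias g i x ^ 2
      ≤ ∑ i, ((if g (x, false) = i then (1 : ℝ) else 0) +
          (if g (x, true) = i then (1 : ℝ) else 0)) := by
        refine Finset.sum_le_sum fun i _ => ?_
        unfold bias
        split_ifs <;> norm_num
    _ = 2 := by
        rw [Finset.sum_add_distrib]
        simp only [Finset.sum_ite_eq, Finset.mem_univ, if_true]
        norm_num

lemma diff_eq_fourier {n m : ℕ} (g : (Fin n → Bool) × Bool → Fin m) (i : Fin m)
    (s : Finset (Fin n)) :
    (((2 : ℝ) ^ n)⁻¹ *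
        ∑ x : Fin n → Bool, (if g (x, parity s x) = i then (1 : ℝ) else 0)) -
      ((2 : ℝ) ^ (n + 1))⁻¹ *
        ∑ x : Fin n → Bool, ∑ y : Bool, (if g (x, y) = i then (1 : ℝ) else 0) =
    ((2 : ℝ) ^ (n + 1))⁻¹ * ∑ x, chi s x * bias g i x := by
  have h2 : ((2 : ℝ) ^ n)⁻¹ = ((2 : ℝ) ^ (n + 1))⁻¹ * 2 := by
    rw [pow_succ]
    field_simp
  rw [h2, mul_assoc, ← mul_sub, Finset.mul_sum, ← Finset.sum_sub_distrib]
  congr 1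
  refine Finset.sum_congr rfl fun x _ => ?_
  rw [chi_eq_parity, Fintype.sum_bool, bias]
  cases parity s x <;> simp <;> split_ifs <;> norm_num

theorem stmt4 (n m : ℕ) (hn : 0 < n) (hm : 0 < m)
    (g : (Fin n → Bool) × Bool → Fin m) :
    ∑ i : Fin m, ∑ s : Finset (Fin n),
        ((((2 : ℝ) ^ n)⁻¹ *
            ∑ x : Fin n → Bool, (if g (x, parity s x) = i then (1 : ℝ) else 0)) -
          ((2 : ℝ) ^ (n + 1))⁻¹ *
            ∑ x : Fin n → Bool, ∑ y : Bool, (if g (x, y) = i then (1 : ℝ) else 0)) ^ 2 ≤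
      (2 : ℝ) ^ ((n : ℝ) / 2) := by
  simp only [diff_eq_fourier, mul_pow, ← Finset.mul_sum, parseval]
  rw [Finset.sum_comm]
  have hsum : ∑ x : Fin n → Bool, ∑ i, bias g i x ^ 2 ≤ 2 ^ n * 2 := by
    calc ∑ x : Fin n → Bool, ∑ i, bias g i x ^ 2
        ≤ ∑ _x : Fin n → Bool, (2 : ℝ) := Finset.sum_le_sum fun x _ => sum_bias_sq_le g x
      _ = 2 ^ n * 2 := by simp
  have hone : (1 : ℝ) ≤ (2 : ℝ) ^ ((n : ℝ) / 2) :=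
    Real.one_le_rpow (by norm_num) (by positivity)
  refine le_trans ?_ hone
  calc _ ≤ (((2 : ℝ) ^ (n + 1))⁻¹) ^ 2 * (2 ^ n * (2 ^ n * 2)) := by gcongr
    _ = 1 / 2 := by
        field_simp
        ring
    _ ≤ 1 := by norm_num
end

section
/- Let n > 0 and f : {0,1}^{n+1} → ℝ. Let X be uniform on {0,1}^n, Y be uniform on {0,1} independent of X, and S be a uniformly random subset of [n] independent of (X,Y). Then Var_S( E_X[f(X, p_S(X))] ) ≤ 2^{−n} · E[f²(X,Y)]. -/
/-!
Write `f (x, b) = a x + (-1)^b * d x` with `a x = (f (x,0) + f (x,1)) / 2` and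
`d x = (f (x,0) - f (x,1)) / 2`. Then `E_X f(X, p_s(X)) = E a + 2⁻ⁿ ∑ x, χ_s x * d x`, where
`χ_s x = (-1)^(p_s x)` is a Walsh character. The variance is at most the second moment about the
constant `E a` (`sum_sub_mean_sq_le`), which by Parseval (`sum_walsh_sq`) equals
`2⁻²ⁿ ∑ x, d x ^ 2`; finally `d x ^ 2 ≤ (f (x,0) ^ 2 + f (x,1) ^ 2) / 2`.
-/

open Finset

/-- The Walsh character `χ_s(x) = (-1)^(p_s(x))`, written as a product over `s`. -/
def walsh {n : ℕ} (s : Finset (Fin n)) (x : Fin n → Bool) : ℝ :=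
  ∏ i ∈ s, if x i = true then -1 else 1

lemma apply_parity {n : ℕ} (f : (Fin n → Bool) × Bool → ℝ) (s : Finset (Fin n))
    (x : Fin n → Bool) :
    f (x, parity s x) = (f (x, false) + f (x, true)) / 2
      + walsh s x * ((f (x, false) - f (x, true)) / 2) := by
  have hw : walsh s x = (-1) ^ (s.filter fun i => x i = true).card := by
    simp [walsh, Finset.prod_ite]
  rw [hw]
  by_cases h : Odd (s.filter fun i => x i = true).card
  · have hp : parity s x = true := by simpa [parity] using h
    rw [hp, h.neg_one_pow]; ring
  · have hp : parity s x = false := by simpa [parity] using h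
    rw [hp, (Nat.not_odd_iff_even.mp h).neg_one_pow]; ring

/-- Orthogonality of the Walsh characters: by multiplicativity the sum over `s` factors as
`∏ i, (1 + (-1)^(x i + y i))`, and a coordinate where `x` and `y` differ contributes `0`. -/
lemma sum_walsh_mul_walsh {n : ℕ} (x y : Fin n → Bool) :
    ∑ s : Finset (Fin n), walsh s x * walsh s y = if x = y then (2 : ℝ) ^ n else 0 := by
  simp only [walsh, ← Finset.prod_mul_distrib]
  rw [← Finset.powerset_univ, ← Finset.prod_one_add]
  split_ifs with h
  · subst h
    have : ∀ i, (1 : ℝ) + (if x i = true then -1 else 1) * (if x i = true then -1 else 1) = 2 := by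
      intro i; split_ifs <;> norm_num
    simp only [this, Finset.prod_const, Finset.card_univ, Fintype.card_fin]
  · obtain ⟨i, hi⟩ := Function.ne_iff.mp h
    apply Finset.prod_eq_zero (Finset.mem_univ i)
    cases hx : x i <;> cases hy : y i <;> simp_all

lemma sum_walsh_sq {n : ℕ} (d : (Fin n → Bool) → ℝ) :
    ∑ s : Finset (Fin n), (∑ x, walsh s x * d x) ^ 2 = 2 ^ n * ∑ x, d x ^ 2 := by
  calc ∑ s : Finset (Fin n), (∑ x, walsh s x * d x) ^ 2
      = ∑ s : Finset (Fin n), ∑ x, ∑ y, d x * d y * (walsh s x * walsh s y) := by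
        refine Finset.sum_congr rfl fun s _ => ?_
        rw [sq, Finset.sum_mul_sum]
        exact Finset.sum_congr rfl fun x _ => Finset.sum_congr rfl fun y _ => by ring
    _ = ∑ x, ∑ y, d x * d y * ∑ s : Finset (Fin n), walsh s x * walsh s y := by
        rw [Finset.sum_comm]
        refine Finset.sum_congr rfl fun x _ => ?_
        rw [Finset.sum_comm]
        exact Finset.sum_congr rfl fun y _ => (Finset.mul_sum ..).symm
    _ = 2 ^ n * ∑ x, d x ^ 2 := by
        simp only [sum_walsh_mul_walsh, mul_ite, mul_zero, Finset.sum_ite_eq, Finset.mem_univ,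
          if_true, Finset.mul_sum]
        exact Finset.sum_congr rfl fun x _ => by ring

/-- The mean minimises the sum of squared deviations. -/
lemma sum_sub_mean_sq_le {ι : Type*} [Fintype ι] (N : ℝ) (hN : (Fintype.card ι : ℝ) = N)
    (hpos : 0 < N) (g : ι → ℝ) (c : ℝ) :
    ∑ s, (g s - N⁻¹ * ∑ t, g t) ^ 2 ≤ ∑ s, (g s - c) ^ 2 := by
  set m := N⁻¹ * ∑ t, g t with hm
  have hsum : ∑ t, g t = N * m := by rw [hm]; field_simp
  have key : ∑ s, (g s - c) ^ 2 = ∑ s, (g s - m) ^ 2 + N * (m - c) ^ 2 := by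
    have h : ∀ s, (g s - c) ^ 2
        = (g s - m) ^ 2 + (2 * (m - c) * g s + ((m - c) ^ 2 - 2 * (m - c) * m)) := by
      intro s; ring
    simp only [h, Finset.sum_add_distrib, ← Finset.mul_sum, hsum, Finset.sum_const,
      Finset.card_univ, nsmul_eq_mul, hN]
    ring
  rw [key]
  have : 0 ≤ N * (m - c) ^ 2 := by positivity
  linarith

theorem stmt7 (n : ℕ) (hn : 0 < n) (f : (Fin n → Bool) × Bool → ℝ) :
    -- Var_S(E_X[f(X, p_S(X))]) ≤ 2^{−n} · E[f²(X,Y)]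
    ((2 : ℝ) ^ n)⁻¹ * ∑ s : Finset (Fin n),
        ((∑ x : Fin n → Bool, ((2 : ℝ) ^ n)⁻¹ * f (x, parity s x)) -
          ((2 : ℝ) ^ n)⁻¹ * ∑ t : Finset (Fin n),
            ∑ x : Fin n → Bool, ((2 : ℝ) ^ n)⁻¹ * f (x, parity t x)) ^ 2 ≤
      ((2 : ℝ) ^ n)⁻¹ *
        ∑ x : Fin n → Bool, ∑ y : Bool, ((2 : ℝ) ^ (n + 1))⁻¹ * (f (x, y)) ^ 2 := by
  have hN : (0 : ℝ) < 2 ^ n := by positivity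
  refine mul_le_mul_of_nonneg_left ?_ (by positivity)
  refine (sum_sub_mean_sq_le ((2 : ℝ) ^ n) (by simp) hN _
    (∑ x, ((2 : ℝ) ^ n)⁻¹ * ((f (x, false) + f (x, true)) / 2))).trans ?_
  have h : ∀ s : Finset (Fin n), (∑ x : Fin n → Bool, ((2 : ℝ) ^ n)⁻¹ * f (x, parity s x))
      - ∑ x, ((2 : ℝ) ^ n)⁻¹ * ((f (x, false) + f (x, true)) / 2)
      = ((2 : ℝ) ^ n)⁻¹ * ∑ x, walsh s x * ((f (x, false) - f (x, true)) / 2) := by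
    intro s
    rw [← Finset.sum_sub_distrib, Finset.mul_sum]
    exact Finset.sum_congr rfl fun x _ => by rw [apply_parity f]; ring
  simp only [h]
  simp only [mul_pow, ← Finset.mul_sum]
  rw [sum_walsh_sq]
  have hc : (((2 : ℝ) ^ n)⁻¹) ^ 2 * (2 ^ n * ∑ x, ((f (x, false) - f (x, true)) / 2) ^ 2)
      = ((2 : ℝ) ^ (n + 1))⁻¹ * ∑ x, 2 * ((f (x, false) - f (x, true)) / 2) ^ 2 := by
    rw [← Finset.mul_sum, pow_succ]
    field_simp
    ring
  rw [hc]
  refine mul_le_mul_of_nonneg_left (Finset.sum_le_sum fun x _ => ?_) (by positivity)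
  rw [Fintype.sum_bool]
  nlinarith [sq_nonneg (f (x, false) + f (x, true))]
end
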